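/- For the Weierstrass ℘-function with period lattice L_ω = ω·ℤ[τ] satisfying ℘′(z)² = 4℘(z)³ − 1, one has ℘′(ω/6, L_ω) = −√3·(3 + 2·∛2 + 2·∛4). -/

import Mathlib

noncomputable section

open Complex Real ComplexConjugate

/-- `τ = (−1+√−3)/2`, a primitive cube root of unity. -/
def tau : ℂ := (-1 + Real.sqrt 3 * Complex.I) / 2

/-- `√−3 = 1 + 2τ`, the square root of `−3` with positive imaginary part. -/
def sqrtm3 : ℂ := Real.sqrt 3 * Complex.I

/-- The ring of integers `O_K = ℤ[τ]` of `K = ℚ(√−3)`, as a subring of `ℂ`. -/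
def Eis : Subring ℂ := Subring.closure {tau}

/-- `τ` as an element of `ℤ[τ]`. -/
def tauO : Eis := ⟨tau, Subring.subset_closure rfl⟩

/-- `√−3` as an element of `ℤ[τ]`. -/
def sqrtm3O : Eis := 1 + 2 * tauO

/-- Membership in the lattice `L_ω = ω·ℤ[τ]`. -/
def inLattice (ω : ℝ) (z : ℂ) : Prop := ∃ a : Eis, z = (ω : ℂ) * a

/-- The Weierstrass `℘`-function of the lattice `L_ω = ω·ℤ[τ]`. -/
def wp (ω : ℝ) (z : ℂ) : ℂ :=
  1 / z ^ 2 + ∑' a : {w : ℂ // inLattice ω w ∧ w ≠ 0},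
    (1 / (z - (a : ℂ)) ^ 2 - 1 / (a : ℂ) ^ 2)

/-- The Weierstrass `ζ`-function of the lattice `L_ω = ω·ℤ[τ]`. -/
def wzeta (ω : ℝ) (z : ℂ) : ℂ :=
  1 / z + ∑' a : {w : ℂ // inLattice ω w ∧ w ≠ 0},
    (1 / (z - (a : ℂ)) + 1 / (a : ℂ) + z / (a : ℂ) ^ 2)

/-- The real cube root of 2, as a complex number. -/
def cbrt2 : ℂ := ((2 : ℝ) ^ ((1 : ℝ) / 3) : ℝ)

/-- The real cube root of 4, as a complex number. -/
def cbrt4 : ℂ := ((4 : ℝ) ^ ((1 : ℝ) / 3) : ℝ)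


open Filter Topology

lemma liouville_const (L : PeriodPair) {f : ℂ → ℂ} (hf : Meromorphic f)
    (hper : ∀ z, ∀ l ∈ L.lattice, f (z + l) = f z)
    (ho : ∀ z, 0 ≤ meromorphicOrderAt f z) :
    ∃ C, ∀ z, AnalyticAt ℂ f z → f z = C := by
  have hon : MeromorphicOn f Set.univ := fun z _ => hf z
  set g := toMeromorphicNFOn f Set.univ with hg
  have hgn : ∀ z, MeromorphicNFAt g z := fun z =>
    meromorphicNFOn_toMeromorphicNFOn f Set.univ (Set.mem_univ z)
  have hfg : ∀ z, f =ᶠ[𝓝[≠] z] g := fun z =>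
    (hon.toMeromorphicNFOn_eq_self_on_nhdsNE (Set.mem_univ z)).symm
  have hga : ∀ z, AnalyticAt ℂ g z := fun z => by
    rw [← (hgn z).meromorphicOrderAt_nonneg_iff_analyticAt, ← meromorphicOrderAt_congr (hfg z)]
    exact ho z
  have hgd : Differentiable ℂ g := fun z => (hga z).differentiableAt
  have hgper : ∀ z, ∀ l ∈ L.lattice, g (z + l) = g z := by
    intro z l hl
    have h1 : (fun w => g (w + l)) =ᶠ[𝓝[≠] z] g := by
      have h2 : Tendsto (fun w => w + l) (𝓝[≠] z) (𝓝[≠] (z + l)) := by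
        refine tendsto_nhdsWithin_iff.mpr ⟨?_, ?_⟩
        · exact (Continuous.tendsto (by fun_prop) z).mono_left nhdsWithin_le_nhds
        · filter_upwards [self_mem_nhdsWithin] with w hw
          simpa using hw
      filter_upwards [h2.eventually (hfg (z + l)), hfg z] with w h3 h4
      rw [← h3, ← h4, hper w l hl]
    have h5 : AnalyticAt ℂ (fun w => g (w + l)) z := by
      have := hga (z + l)
      exact AnalyticAt.fun_comp this (by fun_prop)
    exact ((h5.meromorphicNFAt.eventuallyEq_nhdsNE_iff_eventuallyEq_nhds (hgn z)).mp h1).eq_of_nhds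
  refine ⟨g 0, fun z hz => ?_⟩
  rw [((hz.meromorphicNFAt.eventuallyEq_nhdsNE_iff_eventuallyEq_nhds (hgn z)).mp (hfg z)).eq_of_nhds]
  exact hgd.apply_eq_apply_of_bounded (IsZLattice.isCompact_range_of_periodic L.lattice _
    hgd.continuous fun z w hw ↦ hgper z w hw).isBounded z 0

lemma order_shift_add {f : ℂ → ℂ} (u z : ℂ) :
    meromorphicOrderAt (fun w => f (w + u)) z = meromorphicOrderAt f (z + u) :=
  meromorphicOrderAt_comp_add_const_eq_meromorphicOrderAt

lemma prod_const (L : PeriodPair) {f g : ℂ → ℂ} (n : ℤ) (u : ℂ)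

    (hf : Meromorphic f) (hg : Meromorphic g)
    (hfper : ∀ z, ∀ l ∈ L.lattice, f (z + l) = f z)
    (hgper : ∀ z, ∀ l ∈ L.lattice, g (z + l) = g z)
    (hfa : ∀ z ∉ L.lattice, AnalyticAt ℂ f z) (hga : ∀ z ∉ L.lattice, AnalyticAt ℂ g z)
    (hf1 : ∀ l ∈ L.lattice, ((-n : ℤ) : WithTop ℤ) ≤ meromorphicOrderAt f l)
    (hg1 : ∀ l ∈ L.lattice, ((-n : ℤ) : WithTop ℤ) ≤ meromorphicOrderAt g l)
    (hf2 : ∀ l ∈ L.lattice, ((n : ℤ) : WithTop ℤ) ≤ meromorphicOrderAt f (u + l))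
    (hg2 : ∀ l ∈ L.lattice, ((n : ℤ) : WithTop ℤ) ≤ meromorphicOrderAt g (-u + l)) :
    ∃ C, ∀ z, z ∉ L.lattice → z + u ∉ L.lattice → f (z + u) * g z = C := by
  have hfs : Meromorphic (fun w => f (w + u)) := fun z => by
    have := hf (z + u)
    exact meromorphicAt_comp_add_const_iff_meromorphicAt.mpr this
  have ha : ∀ z, z + u ∉ L.lattice → AnalyticAt ℂ (fun w => f (w + u)) z := fun z hz =>
    AnalyticAt.fun_comp (hfa _ hz) (by fun_prop)
  have key : ((-n : ℤ) : WithTop ℤ) + ((n : ℤ) : WithTop ℤ) = 0 := by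
    rw [← WithTop.coe_add]; simp
  obtain ⟨C, hC⟩ := liouville_const L (f := (fun w => f (w + u)) * g) (hfs.mul hg)
    (fun z l hl => by simp [add_right_comm z l u, hfper _ l hl, hgper _ l hl])
    (fun z => by
      rw [meromorphicOrderAt_mul (hfs z) (hg z), order_shift_add]
      by_cases h1 : z ∈ L.lattice
      · have a := hf2 z h1
        have b := hg1 z h1
        rw [← key, add_comm z u, add_comm (_ : WithTop ℤ) (n : WithTop ℤ)]
        exact add_le_add a b
      · by_cases h2 : z + u ∈ L.lattice
        · have a := hf1 _ h2
          have b := hg2 _ h2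
          rw [show -u + (z + u) = z by ring] at b
          rw [← key]
          exact add_le_add a b
        · exact add_nonneg (hfa _ h2).meromorphicOrderAt_nonneg (hga _ h1).meromorphicOrderAt_nonneg)
  exact ⟨C, fun z h1 h2 => hC z ((ha z h2).mul (hga z h1))⟩

lemma order_of_pow {p q r : ℂ → ℂ} {w : ℂ} (n : ℕ)
    (hq : AnalyticAt ℂ q w) (hq0 : q w ≠ 0) (hr : AnalyticAt ℂ r w) (hr0 : r w = 0)
    (h : ∀ᶠ z in 𝓝 w, q z * p z = r z ^ n) :
    ((n : ℤ) : WithTop ℤ) ≤ meromorphicOrderAt p w := by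
  rw [← meromorphicOrderAt_mul_of_ne_zero (f := p) hq hq0,
    meromorphicOrderAt_congr (f₁ := q * p) (f₂ := r ^ n) (h.filter_mono nhdsWithin_le_nhds),
    meromorphicOrderAt_pow hr.meromorphicAt, hr.meromorphicOrderAt_eq]
  have h1 : 1 ≤ analyticOrderAt r w := by
    rw [Order.one_le_iff_ne_zero]
    exact hr.analyticOrderAt_ne_zero.mpr hr0
  cases h2 : analyticOrderAt r w with
  | top =>
    rcases n with _ | n
    · simp
    · simp only [ENat.map_top]
      have : ((n + 1 : ℕ) : WithTop ℤ) * ⊤ = ⊤ := by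
        apply WithTop.mul_top
        exact_mod_cast Nat.succ_ne_zero n
      rw [this]
      exact le_top
  | coe m =>
    rw [h2] at h1
    have h1' : 1 ≤ m := by exact_mod_cast h1
    simp only [ENat.map_natCast]
    norm_cast
    nlinarith

lemma order_sub_const {f : ℂ → ℂ} {w c : ℂ} {n : ℤ} (hn : n ≤ 0) (hf : MeromorphicAt f w)
    (h : (n : WithTop ℤ) ≤ meromorphicOrderAt f w) :
    (n : WithTop ℤ) ≤ meromorphicOrderAt (fun z => f z - c) w := by
  have h1 := meromorphicOrderAt_add hf (MeromorphicAt.const (-c) w)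
  refine le_trans (le_min h ?_) (h1.trans (le_of_eq ?_))
  · classical
    rw [meromorphicOrderAt_const]
    split_ifs
    · exact le_top
    · exact_mod_cast hn
  · congr 1

lemma tau_sq : tau ^ 2 = -1 - tau := by
  have h : ((Real.sqrt 3 : ℝ) : ℂ) ^ 2 = 3 := by
    rw [← Complex.ofReal_pow, Real.sq_sqrt (by norm_num)]; norm_num
  unfold tau
  linear_combination (1 / 4 : ℂ) * Complex.I ^ 2 * h + (3 / 4 : ℂ) * Complex.I_sq

lemma tau_im : tau.im = Real.sqrt 3 / 2 := by
  simp [tau]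

lemma tau_re : tau.re = -1 / 2 := by
  simp [tau]

lemma tau_cube : tau ^ 3 = 1 := by
  linear_combination (tau - 1) * tau_sq

lemma tau_ne_zero : tau ≠ 0 := by
  intro h
  have := tau_cube
  simp [h] at this

lemma tau_ne_one : tau ≠ 1 := by
  intro h
  have := tau_sq
  rw [h] at this
  norm_num at this

lemma conj_tau : conj tau = -1 - tau := by
  apply Complex.ext
  · simp [tau_re]; norm_num
  · simp

lemma mem_Eis {x : ℂ} : x ∈ Eis ↔ ∃ m n : ℤ, (m : ℂ) + n * tau = x := by
  constructor
  · intro h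
    refine Subring.closure_induction (p := fun x _ => ∃ m n : ℤ, (m : ℂ) + n * tau = x)
      ?_ ?_ ?_ ?_ ?_ ?_ h
    · rintro x rfl
      exact ⟨0, 1, by simp⟩
    · exact ⟨0, 0, by simp⟩
    · exact ⟨1, 0, by simp⟩
    · rintro x y - - ⟨a, b, rfl⟩ ⟨c, d, rfl⟩
      exact ⟨a + c, b + d, by push_cast; ring⟩
    · rintro x - ⟨a, b, rfl⟩
      exact ⟨-a, -b, by push_cast; ring⟩
    · rintro x y - - ⟨a, b, rfl⟩ ⟨c, d, rfl⟩
      exact ⟨a * c - b * d, a * d + b * c - b * d, by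
        push_cast; linear_combination (-(b : ℂ) * d) * tau_sq⟩
  · rintro ⟨m, n, rfl⟩
    have ht : tau ∈ Eis := Subring.subset_closure rfl
    exact Eis.add_mem (intCast_mem Eis m) (Eis.mul_mem (intCast_mem Eis n) ht)

def Lper (ω : ℝ) (hω : 0 < ω) : PeriodPair where
  ω₁ := ω
  ω₂ := ω * tau
  indep := by
    rw [LinearIndependent.pair_iff]
    intro s t h
    have him := congrArg Complex.im h
    have hre := congrArg Complex.re h
    have h3 : (0 : ℝ) < Real.sqrt 3 := by positivity
    simp [tau_im, tau_re, -mul_eq_zero] at him hre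
    have him : t = 0 ∨ ω = 0 := by
      rcases mul_eq_zero.mp him with h | h
      · exact Or.inl h
      · right
        exact (mul_eq_zero.mp h).resolve_right (by positivity)
    have ht : t = 0 := by
      rcases him with h | h
      · exact h
      · exact absurd h hω.ne'
    subst ht
    simpa [hω.ne'] using hre

lemma mem_Lper {ω : ℝ} {hω : 0 < ω} {x : ℂ} :
    x ∈ (Lper ω hω).lattice ↔ ∃ m n : ℤ, (ω : ℂ) * (m + n * tau) = x := by
  rw [PeriodPair.mem_lattice]
  simp only [Lper]
  constructor
  · rintro ⟨m, n, h⟩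
    exact ⟨m, n, by rw [← h]; ring⟩
  · rintro ⟨m, n, h⟩
    exact ⟨m, n, by rw [← h]; ring⟩

lemma inLattice_iff {ω : ℝ} (hω : 0 < ω) {x : ℂ} :
    inLattice ω x ↔ x ∈ (Lper ω hω).lattice := by
  rw [mem_Lper]
  constructor
  · rintro ⟨⟨a, ha⟩, rfl⟩
    obtain ⟨m, n, h⟩ := mem_Eis.mp ha
    exact ⟨m, n, by rw [h]⟩
  · rintro ⟨m, n, h⟩
    exact ⟨⟨_, mem_Eis.mpr ⟨m, n, rfl⟩⟩, h.symm⟩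

/-- Rational points and the lattice. -/
lemma not_mem_Lper {ω : ℝ} (hω : 0 < ω) {x : ℂ} (a b d : ℤ) (hd : d ≠ 0)
    (h : ¬ (d ∣ a ∧ d ∣ b)) (hx : x = (ω : ℂ) * (a + b * tau) / d) :
    x ∉ (Lper ω hω).lattice := by
  rw [mem_Lper, hx]
  rintro ⟨m, n, e⟩
  have hd' : (d : ℂ) ≠ 0 := by exact_mod_cast hd
  have hω' : (ω : ℂ) ≠ 0 := by exact_mod_cast hω.ne'
  have e2 : ((d * m - a : ℤ) : ℂ) + ((d * n - b : ℤ) : ℂ) * tau = 0 := by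
    field_simp at e
    push_cast
    linear_combination e
  have him := congrArg Complex.im e2
  have hre := congrArg Complex.re e2
  have h3 : (0 : ℝ) < Real.sqrt 3 := by positivity
  rw [Complex.add_im, Complex.intCast_im, Complex.mul_im, Complex.intCast_im, Complex.intCast_re,
    tau_im] at him
  rw [Complex.add_re, Complex.intCast_re, Complex.mul_re, Complex.intCast_im, Complex.intCast_re]
    at hre
  have hn : ((d * n - b : ℤ) : ℝ) = 0 := by
    have : ((d * n - b : ℤ) : ℝ) * (Real.sqrt 3 / 2) = 0 := by simpa using him
    exact (mul_eq_zero.mp this).resolve_right (by positivity)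
  rw [hn] at hre
  have hm : ((d * m - a : ℤ) : ℝ) = 0 := by simpa using hre
  have hn' : d * n - b = 0 := by exact_mod_cast hn
  have hm' : d * m - a = 0 := by exact_mod_cast hm
  exact h ⟨⟨m, by linarith⟩, ⟨n, by linarith⟩⟩

lemma wp_eq {ω : ℝ} (hω : 0 < ω) : wp ω = (Lper ω hω).weierstrassP := by
  ext z
  set L := Lper ω hω
  rw [← L.weierstrassPExcept_add 0 z]
  unfold wp PeriodPair.weierstrassPExcept
  have e1 : (∑' a : {w : ℂ // inLattice ω w ∧ w ≠ 0}, (1 / (z - (a : ℂ)) ^ 2 - 1 / (a : ℂ) ^ 2))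
      = ∑' l : L.lattice, if (l : ℂ) = ((0 : L.lattice) : ℂ) then 0
          else (1 / (z - (l : ℂ)) ^ 2 - 1 / (l : ℂ) ^ 2) := by
    let i : {w : ℂ // inLattice ω w ∧ w ≠ 0} → L.lattice :=
      fun a => ⟨a.1, (inLattice_iff hω).mp a.2.1⟩
    have hi : Function.Injective i := fun a b h => Subtype.ext (congrArg (fun x => x.1) h)
    rw [← hi.tsum_eq]
    · refine tsum_congr fun a => ?_
      rw [if_neg]
      exact a.2.2
    · intro l hl
      have hl0 : (l : ℂ) ≠ 0 := by
        intro h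
        apply hl
        simp [h]
      exact ⟨⟨l.1, (inLattice_iff hω).mpr l.2, hl0⟩, rfl⟩
  rw [e1]
  simp
  ring

lemma tau_mul_mem {ω : ℝ} {hω : 0 < ω} {x : ℂ} (h : x ∈ (Lper ω hω).lattice) :
    tau * x ∈ (Lper ω hω).lattice := by
  rw [mem_Lper] at *
  obtain ⟨m, n, rfl⟩ := h
  exact ⟨-n, m - n, by push_cast; linear_combination (-(ω : ℂ) * n) * tau_sq⟩

lemma conj_mem {ω : ℝ} {hω : 0 < ω} {x : ℂ} (h : x ∈ (Lper ω hω).lattice) :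
    conj x ∈ (Lper ω hω).lattice := by
  rw [mem_Lper] at *
  obtain ⟨m, n, rfl⟩ := h
  refine ⟨m - n, -n, ?_⟩
  simp only [map_mul, map_add, conj_tau, Complex.conj_ofReal, map_intCast]
  push_cast; ring

def tauEquiv (ω : ℝ) (hω : 0 < ω) : (Lper ω hω).lattice ≃ (Lper ω hω).lattice where
  toFun x := ⟨tau * x, tau_mul_mem x.2⟩
  invFun x := ⟨tau * (tau * x), tau_mul_mem (tau_mul_mem x.2)⟩
  left_inv x := Subtype.ext (by
    change tau * (tau * (tau * (x : ℂ))) = x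
    linear_combination (x : ℂ) * tau_cube)
  right_inv x := Subtype.ext (by
    change tau * (tau * (tau * (x : ℂ))) = x
    linear_combination (x : ℂ) * tau_cube)

def conjEquiv (ω : ℝ) (hω : 0 < ω) : (Lper ω hω).lattice ≃ (Lper ω hω).lattice where
  toFun x := ⟨conj (x : ℂ), conj_mem x.2⟩
  invFun x := ⟨conj (x : ℂ), conj_mem x.2⟩
  left_inv _ := Subtype.ext (Complex.conj_conj _)
  right_inv _ := Subtype.ext (Complex.conj_conj _)

lemma P_tau {ω : ℝ} (hω : 0 < ω) (z : ℂ) :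
    (Lper ω hω).weierstrassP (tau * z) = tau * (Lper ω hω).weierstrassP z := by
  unfold PeriodPair.weierstrassP
  rw [← (tauEquiv ω hω).tsum_eq, ← tsum_mul_left]
  refine tsum_congr fun l => ?_
  change 1 / (tau * z - tau * (l : ℂ)) ^ 2 - 1 / (tau * (l : ℂ)) ^ 2 = _
  have h : (tau ^ 2)⁻¹ = tau := by
    apply inv_eq_of_mul_eq_one_left
    linear_combination tau_cube
  rw [← mul_sub, mul_pow, mul_pow]
  simp only [one_div, mul_inv, h]
  ring

lemma dP_tau {ω : ℝ} (hω : 0 < ω) (z : ℂ) :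
    (Lper ω hω).derivWeierstrassP (tau * z) = (Lper ω hω).derivWeierstrassP z := by
  unfold PeriodPair.derivWeierstrassP
  rw [← (tauEquiv ω hω).tsum_eq]
  congr 1
  refine tsum_congr fun l => ?_
  change 2 / (tau * z - tau * (l : ℂ)) ^ 3 = _
  rw [← mul_sub, mul_pow, tau_cube, one_mul]

lemma P_conj {ω : ℝ} (hω : 0 < ω) (z : ℂ) :
    (Lper ω hω).weierstrassP (conj z) = conj ((Lper ω hω).weierstrassP z) := by
  unfold PeriodPair.weierstrassP
  rw [← (conjEquiv ω hω).tsum_eq, Complex.conj_tsum]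
  refine tsum_congr fun l => ?_
  change 1 / (conj z - conj (l : ℂ)) ^ 2 - 1 / (conj (l : ℂ)) ^ 2 = _
  simp

lemma dP_conj {ω : ℝ} (hω : 0 < ω) (z : ℂ) :
    (Lper ω hω).derivWeierstrassP (conj z) = conj ((Lper ω hω).derivWeierstrassP z) := by
  unfold PeriodPair.derivWeierstrassP
  rw [← (conjEquiv ω hω).tsum_eq, map_neg, Complex.conj_tsum]
  congr 1
  refine tsum_congr fun l => ?_
  change 2 / (conj z - conj (l : ℂ)) ^ 3 = _
  rw [map_div₀, map_pow, map_sub, Complex.conj_ofNat]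

section main
variable {ω : ℝ} (hω : 0 < ω)

lemma P_per (L : PeriodPair) (z l : ℂ) (hl : l ∈ L.lattice) :
    L.weierstrassP (z + l) = L.weierstrassP z := L.weierstrassP_add_coe z ⟨l, hl⟩

lemma dP_per (L : PeriodPair) (z l : ℂ) (hl : l ∈ L.lattice) :
    L.derivWeierstrassP (z + l) = L.derivWeierstrassP z := L.derivWeierstrassP_add_coe z ⟨l, hl⟩

lemma dP_order (L : PeriodPair) (l : ℂ) (hl : l ∈ L.lattice) :
    meromorphicOrderAt L.derivWeierstrassP l = ((-3 : ℤ) : WithTop ℤ) := by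
  rw [← L.deriv_weierstrassP]
  have := meromorphicOrderAt_deriv_eq_sub_one (n := -2) (by norm_num) (L.order_weierstrassP l hl)
  simpa using this

lemma two_torsion
    (ode : ∀ z ∉ (Lper ω hω).lattice, (Lper ω hω).derivWeierstrassP z ^ 2
      = 4 * (Lper ω hω).weierstrassP z ^ 3 - 1) (e : ℂ) (u : ℂ) (hu : u ∉ (Lper ω hω).lattice)
    (h2u : 2 * u ∈ (Lper ω hω).lattice) (he : (Lper ω hω).weierstrassP u = e) :
    4 * e ^ 3 = 1 ∧ ∃ C, ∀ z, z ∉ (Lper ω hω).lattice → z + u ∉ (Lper ω hω).lattice →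
      ((Lper ω hω).weierstrassP (z + u) - e) * ((Lper ω hω).weierstrassP z - e) = C := by
  set L := Lper ω hω with hL
  have h0 : L.derivWeierstrassP u = 0 := by
    have h1 := dP_per L (-u) (2 * u) h2u
    rw [show -u + 2 * u = u by ring, L.derivWeierstrassP_neg] at h1
    linear_combination h1 / 2
  have he3 : 4 * e ^ 3 = 1 := by
    have := ode u hu
    rw [h0, he] at this
    linear_combination -this
  have he0 : e ≠ 0 := by
    rintro rfl
    norm_num at he3
  refine ⟨he3, ?_⟩
  have hmer : Meromorphic fun z => L.weierstrassP z - e := by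
    have := L.meromorphic_weierstrassP
    fun_prop
  have han : ∀ z ∉ L.lattice, AnalyticAt ℂ (fun z => L.weierstrassP z - e) z := fun z hz =>
    (L.analyticOnNhd_weierstrassP z hz).sub analyticAt_const
  have hper : ∀ z, ∀ l ∈ L.lattice, L.weierstrassP (z + l) - e = L.weierstrassP z - e :=
    fun z l hl => by rw [P_per L z l hl]
  have hpole : ∀ l ∈ L.lattice, ((-2 : ℤ) : WithTop ℤ) ≤
      meromorphicOrderAt (fun z => L.weierstrassP z - e) l := fun l hl =>
    order_sub_const (by norm_num) (L.meromorphic_weierstrassP l) (L.order_weierstrassP l hl).ge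
  have hzero : ∀ l ∈ L.lattice, ((2 : ℤ) : WithTop ℤ) ≤
      meromorphicOrderAt (fun z => L.weierstrassP z - e) (u + l) := by
    intro l hl
    have hw : u + l ∉ L.lattice := fun h => hu (by simpa using L.lattice.sub_mem h hl)
    have hPa := L.analyticOnNhd_weierstrassP _ hw
    refine order_of_pow (q := fun z => 4 * (L.weierstrassP z ^ 2 + e * L.weierstrassP z + e ^ 2))
      (r := L.derivWeierstrassP) 2 (by fun_prop) ?_
      (L.analyticOnNhd_derivWeierstrassP _ hw) ?_ ?_
    · simp only [P_per L u l hl, he]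
      intro h
      apply he0
      have : e ^ 2 = 0 := by linear_combination h / 12
      simpa using this
    · rw [dP_per L u l hl, h0]
    · filter_upwards [L.isClosed_lattice.isOpen_compl.mem_nhds hw] with z hz
      rw [ode z hz]
      linear_combination -he3
  refine prod_const L (f := fun z => L.weierstrassP z - e) (g := fun z => L.weierstrassP z - e)
    2 u hmer hmer hper hper han han hpole hpole hzero ?_
  intro l hl
  have := hzero (l - 2 * u) (L.lattice.sub_mem hl h2u)
  rwa [show u + (l - 2 * u) = -u + l by ring] at this

lemma three_zero (c : ℂ) (hc : c ≠ 0) (u : ℂ) (hu : u ∉ (Lper ω hω).lattice)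
    (ode : ∀ z ∉ (Lper ω hω).lattice, (Lper ω hω).derivWeierstrassP z ^ 2
      = 4 * (Lper ω hω).weierstrassP z ^ 3 - 1)
    (h0 : (Lper ω hω).weierstrassP u = 0) (h1 : (Lper ω hω).derivWeierstrassP u = c) :
    ∀ l ∈ (Lper ω hω).lattice, ((3 : ℤ) : WithTop ℤ) ≤
      meromorphicOrderAt (fun z => (Lper ω hω).derivWeierstrassP z - c) (u + l) := by
  intro l hl
  set L := Lper ω hω with hL
  have hw : u + l ∉ L.lattice := fun h => hu (by simpa using L.lattice.sub_mem h hl)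
  have hPa := L.analyticOnNhd_weierstrassP _ hw
  have hPa' := L.analyticOnNhd_derivWeierstrassP _ hw
  have hc2 : c ^ 2 = -1 := by
    have := ode u hu
    rw [h0, h1] at this
    linear_combination this
  refine order_of_pow (q := fun z => (L.derivWeierstrassP z + c) / 4)
      (r := L.weierstrassP) 3 (by fun_prop) ?_ hPa ?_ ?_
  · simp only [dP_per L u l hl, h1]
    intro h
    apply hc
    linear_combination 2 * h
  · rw [P_per L u l hl, h0]
  · filter_upwards [L.isClosed_lattice.isOpen_compl.mem_nhds hw] with z hz
    linear_combination (ode z hz - hc2) / 4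

lemma three_torsion
    (ode : ∀ z ∉ (Lper ω hω).lattice, (Lper ω hω).derivWeierstrassP z ^ 2
      = 4 * (Lper ω hω).weierstrassP z ^ 3 - 1) (u : ℂ) (hu : u ∉ (Lper ω hω).lattice)
    (htu : tau * u - u ∈ (Lper ω hω).lattice) (c : ℂ)
    (hc : (Lper ω hω).derivWeierstrassP u = c) :
    c ^ 2 = -1 ∧ ∃ C, ∀ z, z ∉ (Lper ω hω).lattice → z + u ∉ (Lper ω hω).lattice →
      ((Lper ω hω).derivWeierstrassP (z + u) - c) * ((Lper ω hω).derivWeierstrassP z - -c) = C := by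
  set L := Lper ω hω with hL
  have h0 : L.weierstrassP u = 0 := by
    have h1 := P_per L u _ htu
    rw [show u + (tau * u - u) = tau * u by ring, P_tau] at h1
    have : (tau - 1) * L.weierstrassP u = 0 := by linear_combination h1
    exact (mul_eq_zero.mp this).resolve_left (sub_ne_zero.mpr tau_ne_one)
  have hc2 : c ^ 2 = -1 := by
    have := ode u hu
    rw [h0, hc] at this
    linear_combination this
  have hc0 : c ≠ 0 := by
    rintro rfl
    norm_num at hc2
  refine ⟨hc2, ?_⟩
  have hu' : -u ∉ L.lattice := by simpa using hu
  have hmer : ∀ c : ℂ, Meromorphic fun z => L.derivWeierstrassP z - c := fun c => by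
    have := L.meromorphic_derivWeierstrassP
    fun_prop
  have han : ∀ c : ℂ, ∀ z ∉ L.lattice, AnalyticAt ℂ (fun z => L.derivWeierstrassP z - c) z :=
    fun c z hz => (L.analyticOnNhd_derivWeierstrassP z hz).sub analyticAt_const
  have hper : ∀ c : ℂ, ∀ z, ∀ l ∈ L.lattice,
      L.derivWeierstrassP (z + l) - c = L.derivWeierstrassP z - c :=
    fun c z l hl => by rw [dP_per L z l hl]
  have hpole : ∀ c : ℂ, ∀ l ∈ L.lattice, ((-3 : ℤ) : WithTop ℤ) ≤
      meromorphicOrderAt (fun z => L.derivWeierstrassP z - c) l := fun c l hl =>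
    order_sub_const (by norm_num) (L.meromorphic_derivWeierstrassP l) (dP_order L l hl).ge
  exact prod_const L (f := fun z => L.derivWeierstrassP z - c)
    (g := fun z => L.derivWeierstrassP z - -c)
    3 u (hmer _) (hmer _) (hper _) (hper _) (han _) (han _) (hpole _) (hpole _)
    (three_zero hω c hc0 u hu ode h0 hc)
    (three_zero hω (-c) (neg_ne_zero.mpr hc0) (-u) hu' ode
      (by rw [PeriodPair.weierstrassP_neg, h0]) (by rw [PeriodPair.derivWeierstrassP_neg, hc]))

lemma dP_third_sq
    (ode : ∀ z ∉ (Lper ω hω).lattice, (Lper ω hω).derivWeierstrassP z ^ 2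
      = 4 * (Lper ω hω).weierstrassP z ^ 3 - 1) : (Lper ω hω).derivWeierstrassP ((ω : ℂ) / 3) ^ 2 = 3 := by
  set L := Lper ω hω with hL
  set u : ℂ := (ω : ℂ) * (tau - 1) / 3 with hu
  have hun : u ∉ L.lattice :=
    not_mem_Lper hω (-1) 1 3 (by norm_num) (by norm_num) (by push_cast; ring)
  have h2un : u + u ∉ L.lattice :=
    not_mem_Lper hω (-2) 2 3 (by norm_num) (by norm_num) (by push_cast; ring)
  have hz : (ω : ℂ) / 3 ∉ L.lattice :=
    not_mem_Lper hω 1 0 3 (by norm_num) (by norm_num) (by push_cast; ring)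
  have hzu : (ω : ℂ) / 3 + u ∉ L.lattice :=
    not_mem_Lper hω 0 1 3 (by norm_num) (by norm_num) (by push_cast; ring)
  have htu : tau * u - u ∈ L.lattice := by
    rw [mem_Lper]
    exact ⟨0, -1, by push_cast; linear_combination (-(ω : ℂ) / 3) * tau_sq⟩
  have h3u : 3 * u ∈ L.lattice := by
    rw [mem_Lper]
    exact ⟨-1, 1, by push_cast; ring⟩
  obtain ⟨hc2, C, hC⟩ := three_torsion hω ode u hun htu _ rfl
  rw [← hL] at hC hc2
  have e1 := hC u hun h2un
  have e2 := hC _ hz hzu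
  have e3 : L.derivWeierstrassP (u + u) = -L.derivWeierstrassP u := by
    have := dP_per L (-u) _ h3u
    rw [show -u + 3 * u = u + u by ring, L.derivWeierstrassP_neg] at this
    exact this
  have e4 : L.derivWeierstrassP ((ω : ℂ) / 3 + u) = L.derivWeierstrassP ((ω : ℂ) / 3) := by
    rw [← dP_tau hω ((ω : ℂ) / 3)]
    congr 1
    ring
  rw [e3] at e1
  rw [e4] at e2
  linear_combination e2 - e1 - 3 * hc2

lemma half_identity
    (ode : ∀ z ∉ (Lper ω hω).lattice, (Lper ω hω).derivWeierstrassP z ^ 2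
      = 4 * (Lper ω hω).weierstrassP z ^ 3 - 1) (z : ℂ) (hz : z ∉ (Lper ω hω).lattice)
    (hzu : z + (ω : ℂ) / 2 ∉ (Lper ω hω).lattice) :
    ((Lper ω hω).weierstrassP (z + (ω : ℂ) / 2) - (Lper ω hω).weierstrassP ((ω : ℂ) / 2)) *
      ((Lper ω hω).weierstrassP z - (Lper ω hω).weierstrassP ((ω : ℂ) / 2))
      = 3 * (Lper ω hω).weierstrassP ((ω : ℂ) / 2) ^ 2 ∧
    4 * (Lper ω hω).weierstrassP ((ω : ℂ) / 2) ^ 3 = 1 := by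
  set L := Lper ω hω with hL
  set u : ℂ := (ω : ℂ) / 2 with hu
  have hun : u ∉ L.lattice :=
    not_mem_Lper hω 1 0 2 (by norm_num) (by norm_num) (by push_cast; ring)
  have h2u : 2 * u ∈ L.lattice := by
    rw [mem_Lper]
    exact ⟨1, 0, by push_cast; ring⟩
  obtain ⟨he, C, hC⟩ := two_torsion hω ode _ u hun h2u rfl
  rw [← hL] at hC he
  refine ⟨?_, he⟩
  have h1 : tau * u ∉ L.lattice :=
    not_mem_Lper hω 0 1 2 (by norm_num) (by norm_num) (by push_cast; ring)
  have h2 : tau * u + u ∉ L.lattice :=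
    not_mem_Lper hω 1 1 2 (by norm_num) (by norm_num) (by push_cast; ring)
  have e1 := hC _ h1 h2
  rw [hC z hz hzu, ← e1]
  have e2 : L.weierstrassP (tau * u + u) = tau * (tau * L.weierstrassP u) := by
    rw [← P_tau, ← P_tau, ← L.weierstrassP_neg]
    congr 1
    linear_combination -u * tau_sq
  rw [e2, P_tau]
  linear_combination (-L.weierstrassP u ^ 2) * (tau_sq - tau_cube + tau_sq - tau_sq)

lemma real_not_mem (t : ℝ) (h0 : 0 < t) (h1 : t < ω) : (t : ℂ) ∉ (Lper ω hω).lattice := by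
  rw [mem_Lper]
  rintro ⟨m, n, e⟩
  have him := congrArg Complex.im e
  have hre := congrArg Complex.re e
  have h3 : (0 : ℝ) < Real.sqrt 3 := by positivity
  simp only [Complex.mul_im, Complex.add_im, Complex.add_re, Complex.intCast_im,
    Complex.intCast_re, Complex.ofReal_re, Complex.ofReal_im, tau_im, Complex.mul_re] at him hre
  have hn : (n : ℝ) = 0 := by
    have : ω * (n * (Real.sqrt 3 / 2)) = 0 := by linear_combination him
    rcases mul_eq_zero.mp this with h | h
    · exact absurd h hω.ne'
    · exact (mul_eq_zero.mp h).resolve_right (by positivity)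
  rw [hn] at hre
  have hm : ω * m = t := by linear_combination hre
  have a1 : (0 : ℝ) < m := by
    by_contra h
    push Not at h
    nlinarith
  have a2 : (m : ℝ) < 1 := by
    by_contra h
    push Not at h
    nlinarith
  have b1 : 0 < m := by exact_mod_cast a1
  have b2 : m < 1 := by exact_mod_cast a2
  omega

lemma P_real (t : ℝ) : (((Lper ω hω).weierstrassP t).re : ℂ) = (Lper ω hω).weierstrassP t := by
  rw [← Complex.conj_eq_iff_re, ← P_conj, Complex.conj_ofReal]

lemma dP_real (t : ℝ) :
    (((Lper ω hω).derivWeierstrassP t).re : ℂ) = (Lper ω hω).derivWeierstrassP t := by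
  rw [← Complex.conj_eq_iff_re, ← dP_conj, Complex.conj_ofReal]

lemma cube_inj {x y : ℝ} (h : x ^ 3 = y ^ 3) : x = y :=
  (Odd.strictMono_pow (by decide : Odd 3)).injective h

lemma value_sixth
    (ode : ∀ z ∉ (Lper ω hω).lattice, (Lper ω hω).derivWeierstrassP z ^ 2
      = 4 * (Lper ω hω).weierstrassP z ^ 3 - 1) (a : ℝ) (ha : a ^ 3 = 2) :
    (Lper ω hω).derivWeierstrassP ((ω : ℂ) / 6)
      = ((-(Real.sqrt 3) * (3 + 2 * a + 2 * a ^ 2) : ℝ) : ℂ) := by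
  set L := Lper ω hω with hL
  set p : ℝ → ℝ := fun t => (L.weierstrassP t).re with hp
  set dp : ℝ → ℝ := fun t => (L.derivWeierstrassP t).re with hdp
  have hpr : ∀ t : ℝ, L.weierstrassP t = (p t : ℂ) := fun t => (P_real hω t).symm
  have hdpr : ∀ t : ℝ, L.derivWeierstrassP t = (dp t : ℂ) := fun t => (dP_real hω t).symm
  have hode : ∀ t : ℝ, 0 < t → t < ω → dp t ^ 2 = 4 * p t ^ 3 - 1 := by
    intro t h0 h1
    have := ode t (real_not_mem hω t h0 h1)
    rw [hpr, hdpr] at this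
    exact_mod_cast this
  have hhalf : ∀ t : ℝ, 0 < t → t < ω / 2 →
      (p (t + ω / 2) - p (ω / 2)) * (p t - p (ω / 2)) = 3 * p (ω / 2) ^ 2 ∧
      4 * p (ω / 2) ^ 3 = 1 := by
    intro t h0 h1
    have := half_identity hω ode t (real_not_mem hω t h0 (by linarith))
      (by
        have := real_not_mem hω (t + ω / 2) (by linarith) (by linarith)
        push_cast at this
        exact this)
    rw [show (ω : ℂ) / 2 = ((ω / 2 : ℝ) : ℂ) by push_cast; ring, ← Complex.ofReal_add, ← hL,
      hpr, hpr, hpr] at this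
    exact_mod_cast this
  have he3 : 4 * p (ω / 2) ^ 3 = 1 := (hhalf (ω / 6) (by linarith) (by linarith)).2
  have he : p (ω / 2) = a / 2 := by
    have : 2 * p (ω / 2) = a := cube_inj (by linear_combination 2 * he3 - ha)
    linarith
  have hthird : p (ω / 3) = 1 := by
    apply cube_inj
    have h1 := hode (ω / 3) (by linarith) (by linarith)
    have h2 : L.derivWeierstrassP ((ω : ℂ) / 3) ^ 2 = 3 := dP_third_sq hω ode
    rw [show (ω : ℂ) / 3 = ((ω / 3 : ℝ) : ℂ) by push_cast; ring, hdpr] at h2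
    have h3 : dp (ω / 3) ^ 2 = 3 := by exact_mod_cast h2
    linear_combination (h3 - h1) / 4
  have hapos : 0 < a := by
    by_contra h
    push Not at h
    nlinarith [sq_nonneg a, pow_two_nonneg a]
  have ha2 : a < 2 := by
    by_contra h
    push Not at h
    nlinarith [sq_nonneg a, mul_nonneg hapos.le (sub_nonneg.mpr h)]
  have hsixth : p (ω / 6) = 1 + a + a ^ 2 := by
    have h1 := (hhalf (ω / 6) (by linarith) (by linarith)).1
    have h2 : p (ω / 6 + ω / 2) = p (ω / 3) := by
      have e1 : L.weierstrassP ((ω / 6 + ω / 2 : ℝ) : ℂ) = L.weierstrassP ((ω / 3 : ℝ) : ℂ) := by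
        have hm : (ω : ℂ) ∈ L.lattice := mem_Lper.mpr ⟨1, 0, by push_cast; ring⟩
        rw [← L.weierstrassP_neg ((ω / 3 : ℝ) : ℂ), ← P_per L (-((ω / 3 : ℝ) : ℂ)) _ hm]
        congr 1
        push_cast; ring
      rw [hp]
      simp only
      rw [e1]
    rw [h2, hthird, he] at h1
    have h3 : (2 - a) * (p (ω / 6) - (1 + a + a ^ 2)) = 0 := by
      linear_combination 2 * h1 + ha
    have := (mul_eq_zero.mp h3).resolve_left (by linarith)
    linarith
  have hnz : ∀ t : ℝ, 0 < t → t < ω / 2 → dp t ≠ 0 := by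
    intro t h0 h1 h
    have h2 := hode t h0 (by linarith)
    have h3 : p t = p (ω / 2) := cube_inj (by rw [h] at h2; linear_combination (-h2 - he3) / 4)
    have h4 := (hhalf t h0 h1).1
    rw [h3, he] at h4
    nlinarith
  have hder : ∀ t : ℝ, 0 < t → t < ω → HasDerivAt p (dp t) t := by
    intro t h0 h1
    have hd : DifferentiableAt ℂ L.weierstrassP t :=
      (L.analyticOnNhd_weierstrassP _ (real_not_mem hω t h0 h1)).differentiableAt
    have := hd.hasDerivAt
    rw [L.deriv_weierstrassP] at this
    exact this.real_of_complex
  have hcont : ∀ t : ℝ, 0 < t → t < ω → ContinuousAt dp t := by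
    intro t h0 h1
    have hd : ContinuousAt L.derivWeierstrassP t :=
      (L.analyticOnNhd_derivWeierstrassP _ (real_not_mem hω t h0 h1)).continuousAt
    exact Complex.continuous_re.continuousAt.comp
      (ContinuousAt.comp (f := fun t : ℝ => (t : ℂ)) hd Complex.continuous_ofReal.continuousAt)
  obtain ⟨c, ⟨hc1, hc2⟩, hc⟩ := exists_hasDerivAt_eq_slope p dp
    (show ω / 6 < ω / 3 by linarith)
    (fun t ht => (hder t (by linarith [ht.1]) (by linarith [ht.2])).continuousAt.continuousWithinAt)
    (fun t ht => hder t (by linarith [ht.1]) (by linarith [ht.2]))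
  have hcneg : dp c < 0 := by
    rw [hc, hthird, hsixth]
    apply div_neg_of_neg_of_pos
    · nlinarith
    · linarith
  have hneg : dp (ω / 6) < 0 := by
    by_contra h
    push Not at h
    have := intermediate_value_Icc' hc1.le (f := dp)
      (fun t ht => (hcont t (by linarith [ht.1]) (by linarith [ht.2])).continuousWithinAt)
    obtain ⟨t, ht, ht0⟩ := this ⟨hcneg.le, h⟩
    exact hnz t (by linarith [ht.1]) (by linarith [ht.2]) ht0
  rw [show (ω : ℂ) / 6 = ((ω / 6 : ℝ) : ℂ) by push_cast; ring, hdpr]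
  congr 1
  have hsq := hode (ω / 6) (by linarith) (by linarith)
  rw [hsixth] at hsq
  have h3 : Real.sqrt 3 ^ 2 = 3 := Real.sq_sqrt (by norm_num)
  have hs : (0 : ℝ) < Real.sqrt 3 := by positivity
  have hfac : (dp (ω / 6) + Real.sqrt 3 * (3 + 2 * a + 2 * a ^ 2)) *
      (dp (ω / 6) - Real.sqrt 3 * (3 + 2 * a + 2 * a ^ 2)) = 0 := by
    linear_combination hsq - (3 + 2 * a + 2 * a ^ 2) ^ 2 * h3
      + (4 * a ^ 3 + 12 * a ^ 2 + 12 * a + 12) * ha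
  have hpos : 0 < Real.sqrt 3 * (3 + 2 * a + 2 * a ^ 2) := by positivity
  have := (mul_eq_zero.mp hfac).resolve_right (by linarith)
  linarith
end main

/-- From [Qiu], (2.12): `℘′(ω/6) = −√3·(3 + 2∛2 + 2∛4)`.
Here `ω > 0` is pinned down by the differential equation `℘′² = 4℘³ − 1` for the
lattice `L_ω = ω·ℤ[τ]` (equivalently, the lattice invariants are `g₂ = 0`, `g₃ = 1`). -/
theorem wp_deriv_value_at_one_sixth
    (ω : ℝ) (hω : 0 < ω)
    (hODE : ∀ z : ℂ, ¬ inLattice ω z → deriv (wp ω) z ^ 2 = 4 * wp ω z ^ 3 - 1) :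
    deriv (wp ω) ((ω : ℂ) / 6) = -(Real.sqrt 3 : ℂ) * (3 + 2 * cbrt2 + 2 * cbrt4) := by
  have ode : ∀ z ∉ (Lper ω hω).lattice, (Lper ω hω).derivWeierstrassP z ^ 2
      = 4 * (Lper ω hω).weierstrassP z ^ 3 - 1 := by
    intro z hz
    have := hODE z (fun h => hz ((inLattice_iff hω).mp h))
    rwa [wp_eq hω, PeriodPair.deriv_weierstrassP] at this
  have ha : ((2 : ℝ) ^ ((1 : ℝ) / 3)) ^ 3 = 2 := by
    rw [← Real.rpow_natCast, ← Real.rpow_mul (by norm_num)]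
    norm_num
  have hb : (4 : ℝ) ^ ((1 : ℝ) / 3) = ((2 : ℝ) ^ ((1 : ℝ) / 3)) ^ 2 := by
    rw [show (4 : ℝ) = 2 ^ 2 by norm_num, ← Real.rpow_natCast, ← Real.rpow_natCast,
      ← Real.rpow_mul (by norm_num), ← Real.rpow_mul (by norm_num)]
    congr 1
    ring
  rw [wp_eq hω, PeriodPair.deriv_weierstrassP, value_sixth hω ode _ ha, cbrt2, cbrt4, hb]
  push_cast
  ring
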